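/- arXiv:2103.09407 — 4 statements merged into one kernel-verified Lean document; each statement's English description precedes it below -/
import Mathlib

section
/- For any matrices A ∈ ℝ^{n×n}, B ∈ ℝ^{n×m} and F ∈ ℝ^{m×n}, the spectral radius of the (n+m)×(n+m) block matrix A_F = [[A, B], [FA, FB]] equals the spectral radius of A + BF, i.e. ρ(A_F) = ρ(A + BF). -/
open Matrix MeasureTheory Filter
open scoped ENNReal

/-- Spectral radius of a real square matrix: the maximum modulus of its complex
eigenvalues, expressed via the spectral radius of its complexification. -/
noncomputable def specRad {ι : Type*} [Fintype ι] [DecidableEq ι]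
    (M : Matrix ι ι ℝ) : ℝ≥0∞ :=
  spectralRadius ℂ (M.map Complex.ofReal)

/-- The block matrix `A_F = [[A, B], [FA, FB]]`. -/
noncomputable def blockAF {n m : ℕ} (A : Matrix (Fin n) (Fin n) ℝ)
    (B : Matrix (Fin n) (Fin m) ℝ) (F : Matrix (Fin m) (Fin n) ℝ) :
    Matrix (Fin n ⊕ Fin m) (Fin n ⊕ Fin m) ℝ :=
  Matrix.fromBlocks A B (F * A) (F * B)

/-- The block column matrix `F̄ = [I_n; F]`. -/
noncomputable def extendF {n m : ℕ} (F : Matrix (Fin m) (Fin n) ℝ) :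
    Matrix (Fin n ⊕ Fin m) (Fin n) ℝ :=
  Matrix.fromRows (1 : Matrix (Fin n) (Fin n) ℝ) F

/-- The block diagonal matrix `Λ = diag(Q, R)`. -/
noncomputable def blockLam {n m : ℕ} (Q : Matrix (Fin n) (Fin n) ℝ)
    (R : Matrix (Fin m) (Fin m) ℝ) :
    Matrix (Fin n ⊕ Fin m) (Fin n ⊕ Fin m) ℝ :=
  Matrix.fromBlocks Q 0 0 R

/-- The LQR gain `F = -γ (R + γ B' X B)⁻¹ B' X A` associated with `X`. -/
noncomputable def gainF {n m : ℕ} (A : Matrix (Fin n) (Fin n) ℝ)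
    (B : Matrix (Fin n) (Fin m) ℝ) (R : Matrix (Fin m) (Fin m) ℝ)
    (γ : ℝ) (X : Matrix (Fin n) (Fin n) ℝ) : Matrix (Fin m) (Fin n) ℝ :=
  -(γ • ((R + γ • (Bᵀ * X * B))⁻¹ * (Bᵀ * X * A)))

/-- `P = [[Q + γA'XA, γA'XB], [γB'XA, R + γB'XB]]`. -/
noncomputable def Pmat {n m : ℕ} (A : Matrix (Fin n) (Fin n) ℝ)
    (B : Matrix (Fin n) (Fin m) ℝ) (Q : Matrix (Fin n) (Fin n) ℝ)
    (R : Matrix (Fin m) (Fin m) ℝ) (γ : ℝ) (X : Matrix (Fin n) (Fin n) ℝ) :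
    Matrix (Fin n ⊕ Fin m) (Fin n ⊕ Fin m) ℝ :=
  Matrix.fromBlocks (Q + γ • (Aᵀ * X * A)) (γ • (Aᵀ * X * B))
    (γ • (Bᵀ * X * A)) (R + γ • (Bᵀ * X * B))

/-- `X` solves the discounted algebraic Riccati equation
`X = Q + γA'XA − γ²A'XB(R + γB'XB)⁻¹B'XA`. -/
def IsAREsol {n m : ℕ} (A : Matrix (Fin n) (Fin n) ℝ)
    (B : Matrix (Fin n) (Fin m) ℝ) (Q : Matrix (Fin n) (Fin n) ℝ)
    (R : Matrix (Fin m) (Fin m) ℝ) (γ : ℝ) (X : Matrix (Fin n) (Fin n) ℝ) : Prop :=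
  X = Q + γ • (Aᵀ * X * A)
    - (γ ^ 2) • (Aᵀ * X * B * (R + γ • (Bᵀ * X * B))⁻¹ * (Bᵀ * X * A))

/-!
With `U = [I; F]` and `V = [A, B]`, the block matrix is the product `U * V`, while `A + B * F` is
the product `V * U` in the other order. Two such products have the same nonzero eigenvalues, and the
eigenvalue `0` does not affect the spectral radius.
-/

section SpectralRadius

variable {𝕜 : Type*} [NormedField 𝕜]

theorem spectralRadius_eq_iSup_spectrum_sdiff_zero {R : Type*} [Ring R] [Algebra 𝕜 R] (a : R) :
    spectralRadius 𝕜 a = ⨆ k ∈ spectrum 𝕜 a \ {0}, (‖k‖₊ : ℝ≥0∞) := by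
  refine le_antisymm (iSup₂_le fun k hk => ?_) (biSup_mono fun k hk => hk.1)
  rcases eq_or_ne k 0 with rfl | hk0
  · simp
  · exact le_iSup₂_of_le k ⟨hk, hk0⟩ le_rfl

variable {ι κ : Type*} [Fintype ι] [DecidableEq ι] [Fintype κ] [DecidableEq κ]

theorem spectrum_matrix_mul_comm_sdiff_zero {K : Type*} [Field K]
    (U : Matrix ι κ K) (V : Matrix κ ι K) :
    spectrum K (U * V) \ {0} = spectrum K (V * U) \ {0} := by
  ext k
  simp only [Set.mem_sdiff, Set.mem_singleton_iff, and_congr_left_iff]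
  intro hk0
  have eval_charpoly : k ^ Fintype.card κ * (U * V).charpoly.eval k =
      k ^ Fintype.card ι * (V * U).charpoly.eval k := by
    simpa using congrArg (Polynomial.eval k) (charpoly_mul_comm' U V)
  rw [mem_spectrum_iff_isRoot_charpoly, mem_spectrum_iff_isRoot_charpoly, Polynomial.IsRoot.def,
    Polynomial.IsRoot.def, ← mul_eq_zero_iff_left (pow_ne_zero (Fintype.card κ) hk0),
    eval_charpoly, mul_eq_zero_iff_left (pow_ne_zero (Fintype.card ι) hk0)]

theorem spectralRadius_matrix_mul_comm (U : Matrix ι κ 𝕜) (V : Matrix κ ι 𝕜) :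
    spectralRadius 𝕜 (U * V) = spectralRadius 𝕜 (V * U) := by
  simp only [spectralRadius_eq_iSup_spectrum_sdiff_zero, spectrum_matrix_mul_comm_sdiff_zero U V]

theorem spectral_radius_blockAF_eq_general
    (A : Matrix ι ι 𝕜) (B : Matrix ι κ 𝕜) (F : Matrix κ ι 𝕜) :
    spectralRadius 𝕜 (fromBlocks A B (F * A) (F * B)) = spectralRadius 𝕜 (A + B * F) :=
  calc spectralRadius 𝕜 (fromBlocks A B (F * A) (F * B))
    _ = spectralRadius 𝕜 (fromRows 1 F * fromCols A B) := by
      rw [fromRows_mul_fromCols, Matrix.one_mul, Matrix.one_mul]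
    _ = spectralRadius 𝕜 (fromCols A B * fromRows 1 F) := spectralRadius_matrix_mul_comm _ _
    _ = spectralRadius 𝕜 (A + B * F) := by rw [fromCols_mul_fromRows, Matrix.mul_one]

theorem specRad_eq_spectralRadius_map_ofRealHom (M : Matrix ι ι ℝ) :
    specRad M = spectralRadius ℂ (M.map Complex.ofRealHom) :=
  rfl

end SpectralRadius

theorem spectral_radius_blockAF_eq (n m : ℕ) (hn : 0 < n) (hm : 0 < m)
    (A : Matrix (Fin n) (Fin n) ℝ) (B : Matrix (Fin n) (Fin m) ℝ)
    (F : Matrix (Fin m) (Fin n) ℝ) :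
    specRad (blockAF A B F) = specRad (A + B * F) := by
  simp only [specRad_eq_spectralRadius_map_ofRealHom, blockAF, fromBlocks_map, Matrix.map_mul,
    Matrix.map_add _ (map_add Complex.ofRealHom), spectral_radius_blockAF_eq_general]
end

section
/- Suppose ρ(A + BF) < 1. Then there exists a unique symmetric matrix S ∈ ℝ^{(n+m)×(n+m)} satisfying γ A_F S A_F' + Γ + (γ/(1−γ)) F̄ Σw F̄' = S, and this S is positive definite. -/
open Matrix MeasureTheory Filter
open scoped ENNReal

/-!
Absorbing the discount into `P = √γ A_F` turns the equation into the Stein equation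
`S = P S Pᴴ + Q` with `Q` positive definite. Since `A_F = F̄ [A, B]` and `[A, B] F̄ = A + B F`, the
powers of `P` are governed by those of `√γ (A + B F)`, which tend to zero by Gelfand's formula.
Hence `X ↦ P X Pᴴ` has powers tending pointwise to zero, so it has no nonzero fixed point and, by
finite dimensionality, the Stein equation is uniquely solvable. Its solution is the limit of the
partial sums of `∑ Pᵏ Q (Pᴴ)ᵏ`, hence positive semidefinite, and then `S = P S Pᴴ + Q` is
positive definite.
-/

section SpectralRadius

theorem spectralRadius_smul {𝕜 R : Type*} [NormedField 𝕜] [Ring R] [Algebra 𝕜 R] (c : 𝕜) (a : R) :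
    spectralRadius 𝕜 (c • a) = ‖c‖ₑ * spectralRadius 𝕜 a := by
  obtain rfl | hc := eq_or_ne c 0
  · simp
  · have hspec : spectrum 𝕜 (c • a) = (c * ·) '' spectrum 𝕜 a :=
      spectrum.unit_smul_eq_smul a (Units.mk0 c hc)
    simp only [spectralRadius, hspec, iSup_image, nnnorm_mul, ENNReal.coe_mul, ENNReal.mul_iSup,
      enorm_eq_nnnorm]

theorem tendsto_pow_atTop_nhds_zero_of_spectralRadius_lt_one {R : Type*} [NormedRing R]
    [NormedAlgebra ℂ R] [CompleteSpace R] {a : R} (ha : spectralRadius ℂ a < 1) :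
    Tendsto (fun k : ℕ => a ^ k) atTop (nhds 0) := by
  obtain ⟨r, har, hr⟩ := exists_between ha
  lift r to NNReal using hr.ne_top
  have hroot : ∀ᶠ k : ℕ in atTop, (‖a ^ k‖₊ : ℝ≥0∞) ^ (1 / k : ℝ) < r :=
    (spectrum.pow_nnnorm_pow_one_div_tendsto_nhds_spectralRadius a).eventually_lt_const har
  have hgeom : ∀ᶠ k : ℕ in atTop, ‖a ^ k‖ ≤ (r : ℝ) ^ k := by
    filter_upwards [hroot, eventually_gt_atTop 0] with k hk hk0
    have hle : (‖a ^ k‖₊ : ℝ≥0∞) ≤ r ^ k := by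
      rw [← ENNReal.rpow_natCast, ← ENNReal.rpow_inv_le_iff (by positivity), ← one_div]
      exact hk.le
    exact_mod_cast hle
  exact squeeze_zero_norm' hgeom
    (tendsto_pow_atTop_nhds_zero_of_lt_one r.2 (by exact_mod_cast hr))

variable {ι : Type*} [Fintype ι] [DecidableEq ι]

theorem specRad_smul (c : ℝ) (M : Matrix ι ι ℝ) : specRad (c • M) = ‖c‖ₑ * specRad M := by
  have hmap : (c • M).map Complex.ofReal = (c : ℂ) • M.map Complex.ofReal := by ext; simp
  rw [specRad, hmap, spectralRadius_smul, specRad, enorm_eq_nnnorm, enorm_eq_nnnorm,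
    Complex.nnnorm_real]

theorem specRad_sqrt_smul_lt_one {c : ℝ} (hc : 0 ≤ c) {M : Matrix ι ι ℝ}
    (h : ENNReal.ofReal c * specRad M ^ 2 < 1) : specRad (√c • M) < 1 := by
  rw [← pow_lt_one_iff two_ne_zero, specRad_smul, mul_pow, ← enorm_pow, Real.sq_sqrt hc,
    Real.enorm_of_nonneg hc]
  exact h

open scoped Matrix.Norms.Operator in
theorem tendsto_pow_atTop_nhds_zero_of_specRad_lt_one {M : Matrix ι ι ℝ} (hM : specRad M < 1) :
    Tendsto (fun k : ℕ => M ^ k) atTop (nhds 0) := by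
  have hcomplex : Tendsto (fun k : ℕ => (M.map Complex.ofReal) ^ k) atTop (nhds 0) :=
    tendsto_pow_atTop_nhds_zero_of_spectralRadius_lt_one hM
  have hre : Continuous fun X : Matrix ι ι ℂ => X.map Complex.re :=
    continuous_id.matrix_map Complex.continuous_re
  have hlim := (hre.tendsto 0).comp hcomplex
  rw [Matrix.map_zero _ Complex.zero_re] at hlim
  refine hlim.congr fun k => ?_
  have hpow : (M.map Complex.ofReal) ^ k = (M ^ k).map Complex.ofReal :=
    (map_pow Complex.ofRealHom.mapMatrix M k).symm
  ext i j
  simp [hpow]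

end SpectralRadius

section RectangularProduct

variable {ι κ R : Type*} [Fintype ι] [Fintype κ] [DecidableEq ι] [DecidableEq κ]

theorem matrix_mul_pow_succ [Semiring R] (U : Matrix ι κ R) (V : Matrix κ ι R) (k : ℕ) :
    (U * V) ^ (k + 1) = U * (V * U) ^ k * V := by
  induction k with
  | zero => simp
  | succ k ih => rw [pow_succ, ih, pow_succ (V * U)]; simp only [Matrix.mul_assoc]

theorem tendsto_matrix_mul_pow_nhds_zero_of_mul_comm [Semiring R] [TopologicalSpace R]
    [IsTopologicalSemiring R] {U : Matrix ι κ R} {V : Matrix κ ι R}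
    (h : Tendsto (fun k : ℕ => (V * U) ^ k) atTop (nhds 0)) :
    Tendsto (fun k : ℕ => (U * V) ^ k) atTop (nhds 0) := by
  rw [← tendsto_add_atTop_iff_nat 1]
  simp only [matrix_mul_pow_succ]
  have hcont : Continuous fun X : Matrix κ κ R => U * X * V := by fun_prop
  simpa [Function.comp_def] using (hcont.tendsto 0).comp h

end RectangularProduct

section NeumannSeries

variable {R E : Type*} [AddCommGroup E] [TopologicalSpace E]

theorem tendsto_sum_pow_apply_of_apply_add_eq [Semiring R] [Module R E] [IsTopologicalAddGroup E]
    {L : Module.End R E} {x y : E} (hx : Tendsto (fun k : ℕ => (L ^ k) x) atTop (nhds 0))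
    (hxy : L x + y = x) :
    Tendsto (fun N : ℕ => ∑ k ∈ Finset.range N, (L ^ k) y) atTop (nhds x) := by
  have hy : y = (1 - L) x := eq_sub_of_add_eq' hxy
  have hpartial (N : ℕ) : ∑ k ∈ Finset.range N, (L ^ k) y = x - (L ^ N) x := by
    rw [hy, ← LinearMap.sum_apply, ← Module.End.mul_apply, geom_sum_mul_neg]
    rfl
  simpa only [hpartial, sub_zero] using hx.const_sub x

theorem existsUnique_apply_add_eq_of_tendsto_pow [DivisionRing R] [Module R E]
    [FiniteDimensional R E] [T2Space E] {L : Module.End R E}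
    (hL : ∀ x, Tendsto (fun k : ℕ => (L ^ k) x) atTop (nhds 0)) (y : E) :
    ∃! x, L x + y = x := by
  have hinj : Function.Injective (1 - L : Module.End R E) := by
    refine (injective_iff_map_eq_zero _).2 fun x hx => ?_
    have hfix : Function.IsFixedPt L x := (sub_eq_zero.1 hx).symm
    have hconst (k : ℕ) : (L ^ k) x = x := by rw [Module.End.pow_apply]; exact hfix.iterate k
    simpa only [hconst, tendsto_const_nhds_iff] using hL x
  have hbij : Function.Bijective (1 - L : Module.End R E) :=
    ⟨hinj, LinearMap.injective_iff_surjective.1 hinj⟩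
  refine (existsUnique_congr fun x => ?_).1 (hbij.existsUnique y)
  rw [LinearMap.sub_apply, Module.End.one_apply, sub_eq_iff_eq_add', eq_comm]

end NeumannSeries

section SteinEquation

open scoped ComplexOrder

variable {ι 𝕜 : Type*} [RCLike 𝕜]

theorem isClosed_posSemidef : IsClosed {M : Matrix ι ι 𝕜 | M.PosSemidef} := by
  simp only [Matrix.PosSemidef, Matrix.IsHermitian, Finsupp.sum, Set.ofPred_and, Set.ofPred_forall]
  refine (isClosed_eq (by fun_prop) continuous_id).inter (isClosed_iInter fun x => ?_)
  exact isClosed_le continuous_const (by fun_prop)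

variable [Fintype ι]

/-- The linear operator `X ↦ P X Pᴴ`, whose inhomogeneous fixed-point equation
`P X Pᴴ + Q = X` is the Stein (discrete Lyapunov) equation. -/
def steinOp (P : Matrix ι ι 𝕜) : Module.End 𝕜 (Matrix ι ι 𝕜) :=
  LinearMap.mulLeftRight 𝕜 (P, Pᴴ)

@[simp]
theorem steinOp_apply (P X : Matrix ι ι 𝕜) : steinOp P X = P * X * Pᴴ := rfl

variable [DecidableEq ι]

theorem steinOp_pow (P : Matrix ι ι 𝕜) (k : ℕ) : steinOp P ^ k = steinOp (P ^ k) := by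
  ext1 X
  induction k with
  | zero => simp
  | succ k ih =>
    rw [pow_succ', Module.End.mul_apply, ih, pow_succ' P]
    simp only [steinOp_apply, Matrix.conjTranspose_mul, Matrix.mul_assoc]

variable {P : Matrix ι ι 𝕜}

theorem tendsto_steinOp_pow_apply (hP : Tendsto (fun k : ℕ => P ^ k) atTop (nhds 0))
    (X : Matrix ι ι 𝕜) : Tendsto (fun k : ℕ => (steinOp P ^ k) X) atTop (nhds 0) := by
  have hcont : Continuous fun Y : Matrix ι ι 𝕜 => Y * X * Yᴴ := by fun_prop
  simpa [steinOp_pow, Function.comp_def] using (hcont.tendsto 0).comp hP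

theorem existsUnique_stein (hP : Tendsto (fun k : ℕ => P ^ k) atTop (nhds 0))
    (Q : Matrix ι ι 𝕜) : ∃! S, P * S * Pᴴ + Q = S :=
  existsUnique_apply_add_eq_of_tendsto_pow (L := steinOp P) (tendsto_steinOp_pow_apply hP) Q

theorem posSemidef_of_stein (hP : Tendsto (fun k : ℕ => P ^ k) atTop (nhds 0))
    {Q S : Matrix ι ι 𝕜} (hQ : Q.PosSemidef) (hS : P * S * Pᴴ + Q = S) : S.PosSemidef := by
  have hsum : Tendsto (fun N : ℕ => ∑ k ∈ Finset.range N, (steinOp P ^ k) Q) atTop (nhds S) :=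
    tendsto_sum_pow_apply_of_apply_add_eq (tendsto_steinOp_pow_apply hP S) hS
  refine isClosed_posSemidef.mem_of_tendsto hsum (.of_forall fun N => ?_)
  refine Matrix.posSemidef_sum _ fun k _ => ?_
  rw [steinOp_pow]
  exact hQ.mul_mul_conjTranspose_same (P ^ k)

theorem posDef_of_stein (hP : Tendsto (fun k : ℕ => P ^ k) atTop (nhds 0))
    {Q S : Matrix ι ι 𝕜} (hQ : Q.PosDef) (hS : P * S * Pᴴ + Q = S) : S.PosDef := by
  rw [← hS]
  exact .posSemidef_add
    ((posSemidef_of_stein hP hQ.posSemidef hS).mul_mul_conjTranspose_same P) hQ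

end SteinEquation

section ClosedLoop

variable {n m : ℕ} (A : Matrix (Fin n) (Fin n) ℝ) (B : Matrix (Fin n) (Fin m) ℝ)
  (F : Matrix (Fin m) (Fin n) ℝ)

theorem blockAF_eq_extendF_mul_fromCols : blockAF A B F = extendF F * Matrix.fromCols A B := by
  simp [blockAF, extendF]

theorem fromCols_mul_extendF : Matrix.fromCols A B * extendF F = A + B * F := by
  simp [extendF, Matrix.fromCols_mul_fromRows]

variable {A B F}

theorem tendsto_smul_blockAF_pow {c : ℝ} (h : specRad (c • (A + B * F)) < 1) :
    Tendsto (fun k : ℕ => (c • blockAF A B F) ^ k) atTop (nhds 0) := by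
  rw [blockAF_eq_extendF_mul_fromCols, ← Matrix.mul_smul]
  apply tendsto_matrix_mul_pow_nhds_zero_of_mul_comm
  rw [Matrix.smul_mul, fromCols_mul_extendF]
  exact tendsto_pow_atTop_nhds_zero_of_specRad_lt_one h

end ClosedLoop

theorem lyapunov_unique_posdef_solution_general {n m : ℕ}
    {A : Matrix (Fin n) (Fin n) ℝ} {B : Matrix (Fin n) (Fin m) ℝ}
    {γ : ℝ} (hγ0 : 0 ≤ γ) (hγ1 : γ < 1)
    {Sw : Matrix (Fin n) (Fin n) ℝ} (hSw : Sw.PosSemidef)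
    {Γ : Matrix (Fin n ⊕ Fin m) (Fin n ⊕ Fin m) ℝ} (hΓ : Γ.PosDef)
    {F : Matrix (Fin m) (Fin n) ℝ} (hF : ENNReal.ofReal γ * specRad (A + B * F) ^ 2 < 1) :
    ∃ S : Matrix (Fin n ⊕ Fin m) (Fin n ⊕ Fin m) ℝ,
      γ • (blockAF A B F * S * (blockAF A B F)ᵀ) + Γ
          + (γ / (1 - γ)) • (extendF F * Sw * (extendF F)ᵀ) = S ∧
      S.PosDef ∧
      ∀ S' : Matrix (Fin n ⊕ Fin m) (Fin n ⊕ Fin m) ℝ,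
        γ • (blockAF A B F * S' * (blockAF A B F)ᵀ) + Γ
            + (γ / (1 - γ)) • (extendF F * Sw * (extendF F)ᵀ) = S' → S' = S := by
  set P := √γ • blockAF A B F
  set Q := Γ + (γ / (1 - γ)) • (extendF F * Sw * (extendF F)ᵀ)
  have hP : Tendsto (fun k : ℕ => P ^ k) atTop (nhds 0) :=
    tendsto_smul_blockAF_pow (specRad_sqrt_smul_lt_one hγ0 hF)
  have hQ : Q.PosDef := hΓ.add_posSemidef <|
    (hSw.mul_mul_conjTranspose_same (extendF F)).smul (div_nonneg hγ0 (sub_nonneg.2 hγ1.le))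
  have hdiscount (X : Matrix (Fin n ⊕ Fin m) (Fin n ⊕ Fin m) ℝ) :
      γ • (blockAF A B F * X * (blockAF A B F)ᵀ) = P * X * Pᴴ := by
    simp [P, smul_smul, Real.mul_self_sqrt hγ0]
  obtain ⟨S, hS, huniq⟩ := existsUnique_stein hP Q
  simp only [hdiscount, add_assoc]
  exact ⟨S, hS, posDef_of_stein hP hQ hS, huniq⟩

theorem lyapunov_unique_posdef_solution (n m : ℕ) (hn : 0 < n) (hm : 0 < m)
    (A : Matrix (Fin n) (Fin n) ℝ) (B : Matrix (Fin n) (Fin m) ℝ)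
    (γ : ℝ) (hγ0 : 0 < γ) (hγ1 : γ < 1)
    (Sw : Matrix (Fin n) (Fin n) ℝ) (hSw : Sw.PosDef)
    (Γ : Matrix (Fin n ⊕ Fin m) (Fin n ⊕ Fin m) ℝ) (hΓ : Γ.PosDef)
    (F : Matrix (Fin m) (Fin n) ℝ) (hF : specRad (A + B * F) < 1) :
    ∃ S : Matrix (Fin n ⊕ Fin m) (Fin n ⊕ Fin m) ℝ,
      S.IsSymm ∧
      γ • (blockAF A B F * S * (blockAF A B F)ᵀ) + Γ
          + (γ / (1 - γ)) • (extendF F * Sw * (extendF F)ᵀ) = S ∧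
      S.PosDef ∧
      ∀ S' : Matrix (Fin n ⊕ Fin m) (Fin n ⊕ Fin m) ℝ, S'.IsSymm →
        γ • (blockAF A B F * S' * (blockAF A B F)ᵀ) + Γ
            + (γ / (1 - γ)) • (extendF F * Sw * (extendF F)ᵀ) = S' → S' = S := by
  have hγF : ENNReal.ofReal γ * specRad (A + B * F) ^ 2 < 1 :=
    mul_lt_one_of_lt_of_le (ENNReal.ofReal_lt_one.2 hγ1) (pow_le_one₀ zero_le hF.le)
  obtain ⟨S, hS, hpos, huniq⟩ :=
    lyapunov_unique_posdef_solution_general hγ0.le hγ1 hSw.posSemidef hΓ hγF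
  exact ⟨S, Matrix.isHermitian_iff_isSymm.1 hpos.isHermitian, hS, hpos, fun S' _ => huniq S'⟩
end

section
/- Suppose F ∈ ℝ^{m×n} satisfies ρ(A + BF) < 1. Then the series S := Σ_{k=0}^{∞} γ^k [ A_F^k Γ (A_F^k)' + Σ_{j=0}^{k−1} A_F^j F̄ Σw F̄' (A_F^j)' ] converges (entrywise), and its sum is the unique symmetric positive definite solution of the Lyapunov equation γ A_F S A_F' + Γ + (γ/(1−γ)) F̄ Σw F̄' = S. -/
open Matrix MeasureTheory Filter
open scoped ENNReal

/-!
Put `T X = γ M X Mᵀ` with `M = A_F`. The series is `∑ T^k Γ` plus the Cauchy product of `∑ γ^(i+1)`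
and `∑ T^j W`, where `W = F̄ Σw F̄ᵀ`, so it sums to the Neumann series `∑ T^k Q` for
`Q = Γ + (γ / (1 - γ)) W`, which solves `T S + Q = S`. The Neumann series converges because
`A_F = F̄ [A B]` and `A + B F = [A B] F̄` have the same nonzero eigenvalues, and Gelfand's formula
bounds the powers of `A_F`. Two solutions differ by a fixed point of `T`, which vanishes since
`T^k → 0`.
-/

open Asymptotics Finset Topology
open scoped NNReal

section Series

variable {𝕜 E : Type*} [NormedField 𝕜] [NormedAddCommGroup E] [NormedSpace 𝕜 E] [CompleteSpace E]

theorem hasSum_sum_antidiagonal_smul {f : ℕ → 𝕜} {g : ℕ → E} {a : 𝕜} {b : E}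
    (hf : HasSum f a) (hg : HasSum g b)
    (hf_norm : Summable fun i ↦ ‖f i‖) (hg_norm : Summable fun j ↦ ‖g j‖) :
    HasSum (fun k ↦ ∑ ij ∈ antidiagonal k, f ij.1 • g ij.2) (a • b) := by
  have summable_prod : Summable fun ij : ℕ × ℕ ↦ f ij.1 • g ij.2 := by
    refine Summable.of_norm ?_
    simpa only [norm_smul] using
      hf_norm.mul_of_nonneg hg_norm (fun _ ↦ norm_nonneg _) (fun _ ↦ norm_nonneg _)
  have hasSum_sigma := HasAntidiagonal.sigmaAntidiagonalEquivProd.hasSum_iff.mpr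
    (hf.smul hg summable_prod)
  refine hasSum_sigma.sigma fun k ↦ ?_
  rw [← Finset.sum_coe_sort]
  exact hasSum_fintype _

theorem hasSum_sum_range_pow_sub_smul {c : 𝕜} (hc : ‖c‖ < 1) {g : ℕ → E} {b : E}
    (hg : HasSum g b) (hg_norm : Summable fun j ↦ ‖g j‖) :
    HasSum (fun k ↦ ∑ j ∈ range k, c ^ (k - j) • g j) ((c / (1 - c)) • b) := by
  have geometric : HasSum (fun i ↦ c * c ^ i) (c / (1 - c)) := by
    simpa only [div_eq_mul_inv] using (hasSum_geometric_of_norm_lt_one hc).mul_left c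
  have geometric_norm : Summable fun i ↦ ‖c * c ^ i‖ := by
    simpa only [norm_mul, norm_pow] using
      (summable_geometric_of_lt_one (norm_nonneg c) hc).mul_left ‖c‖
  have cauchy := hasSum_sum_antidiagonal_smul geometric hg geometric_norm hg_norm
  have shifted (k : ℕ) : ∑ ij ∈ antidiagonal k, (c * c ^ ij.1) • g ij.2 =
      ∑ j ∈ range (k + 1), c ^ (k + 1 - j) • g j := by
    rw [← Nat.sum_antidiagonal_swap]
    refine (Nat.sum_antidiagonal_eq_sum_range_succ (fun j i ↦ (c * c ^ i) • g j) k).trans ?_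
    refine sum_congr rfl fun j hj ↦ ?_
    rw [← pow_succ', Nat.succ_sub (mem_range_succ_iff.mp hj)]
  simp only [shifted] at cauchy
  simpa using cauchy.zero_add (f := fun k ↦ ∑ j ∈ range k, c ^ (k - j) • g j)

end Series

section Neumann

variable {R E : Type*} [Semiring R] [AddCommGroup E] [Module R E] [TopologicalSpace E] [T2Space E]
  {T : Module.End R E}

theorem apply_add_eq_of_hasSum_pow_apply [ContinuousAdd E] (hT : Continuous T) {q s : E}
    (hs : HasSum (fun k ↦ (T ^ k) q) s) : T s + q = s := by
  have tail : HasSum (fun k ↦ (T ^ (k + 1)) q) (T s) := by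
    simpa only [pow_succ', Module.End.mul_apply, Function.comp_def] using hs.map T hT
  simpa [add_comm] using (tail.zero_add (f := fun k ↦ (T ^ k) q)).unique hs

theorem eq_of_apply_add_eq_of_tendsto_pow_apply {q x y : E}
    (hT : Tendsto (fun k ↦ (T ^ k) (x - y)) atTop (𝓝 0))
    (hx : T x + q = x) (hy : T y + q = y) : x = y := by
  have fixed : T (x - y) = x - y := by
    rw [map_sub, ← add_sub_add_right_eq_sub (T x) (T y) q, hx, hy]
  have fixed_pow (k : ℕ) : (T ^ k) (x - y) = x - y := by
    rw [Module.End.pow_apply, Function.iterate_fixed fixed]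
  simp only [fixed_pow] at hT
  exact sub_eq_zero.mp (tendsto_const_nhds_iff.mp hT)

end Neumann

section PosSemidef

variable {R ι α : Type*} [Ring R] [PartialOrder R] [StarRing R] [TopologicalSpace R]
  [IsTopologicalRing R] [ContinuousStar R] [OrderClosedTopology R] [IsOrderedAddMonoid R]

theorem posSemidef_of_hasSum {f : α → Matrix ι ι R} {S : Matrix ι ι R}
    (hf : ∀ a, (f a).PosSemidef) (hS : HasSum f S) : S.PosSemidef := by
  have hS_star : HasSum f Sᴴ := by
    simpa only [(hf _).isHermitian.eq] using hS.matrix_conjTranspose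
  have entry (i j : ι) : HasSum (fun a ↦ f a i j) (S i j) :=
    Pi.hasSum.mp (Pi.hasSum.mp hS i) j
  refine ⟨hS_star.unique hS, fun x ↦ ?_⟩
  have quadForm : HasSum (fun a ↦ x.sum fun i xi ↦ x.sum fun j xj ↦ star xi * f a i j * xj)
      (x.sum fun i xi ↦ x.sum fun j xj ↦ star xi * S i j * xj) :=
    hasSum_sum fun i _ ↦ hasSum_sum fun j _ ↦ ((entry i j).mul_left _).mul_right _
  exact quadForm.nonneg fun a ↦ (hf a).2 x

end PosSemidef

section SpectralRadius

open scoped Matrix.Norms.Frobenius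

theorem isBigO_pow_of_spectralRadius_lt {𝔸 : Type*} [NormedRing 𝔸] [NormedAlgebra ℂ 𝔸]
    [CompleteSpace 𝔸] {a : 𝔸} {r : ℝ≥0} (ha : spectralRadius ℂ a < r) :
    (fun k ↦ a ^ k) =O[atTop] fun k ↦ (r : ℝ) ^ k := by
  have root_lt :=
    (spectrum.pow_nnnorm_pow_one_div_tendsto_nhds_spectralRadius a).eventually_lt_const ha
  refine IsBigO.of_norm_eventuallyLE ?_
  filter_upwards [root_lt, eventually_gt_atTop 0] with k hk k_pos
  rw [one_div, ENNReal.rpow_inv_lt_iff (by positivity), ENNReal.rpow_natCast] at hk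
  exact_mod_cast hk.le

variable {ι κ : Type*} [Fintype ι] [DecidableEq ι] [Fintype κ] [DecidableEq κ]

theorem isBigO_pow_of_specRad_lt {M : Matrix ι ι ℝ} {r : ℝ≥0} (hM : specRad M < r) :
    (fun k ↦ M ^ k) =O[atTop] fun k ↦ (r : ℝ) ^ k := by
  have norm_pow_map (k : ℕ) : ‖M.map Complex.ofReal ^ k‖ = ‖M ^ k‖ := by
    rw [← Matrix.frobenius_norm_map_eq (M ^ k) Complex.ofReal Complex.norm_real]
    exact congrArg norm (map_pow Complex.ofRealHom.mapMatrix M k).symm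
  exact ((isBigO_pow_of_spectralRadius_lt hM).norm_left.congr_left norm_pow_map).of_norm_left

theorem mem_spectrum_mul_comm {K : Type*} [Field K] (X : Matrix ι κ K) (Y : Matrix κ ι K)
    {μ : K} (hμ : μ ≠ 0) : μ ∈ spectrum K (X * Y) ↔ μ ∈ spectrum K (Y * X) := by
  have charpoly_eval := congrArg (Polynomial.eval μ) (Matrix.charpoly_mul_comm' X Y)
  simp only [Polynomial.eval_mul, Polynomial.eval_pow, Polynomial.eval_X] at charpoly_eval
  rw [Matrix.mem_spectrum_iff_isRoot_charpoly, Matrix.mem_spectrum_iff_isRoot_charpoly,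
    Polynomial.IsRoot, Polynomial.IsRoot, ← mul_eq_zero_iff_left (pow_ne_zero _ hμ),
    charpoly_eval, mul_eq_zero_iff_left (pow_ne_zero _ hμ)]

theorem spectralRadius_mul_le_mul_comm {𝕜 : Type*} [NormedField 𝕜]
    (X : Matrix ι κ 𝕜) (Y : Matrix κ ι 𝕜) :
    spectralRadius 𝕜 (X * Y) ≤ spectralRadius 𝕜 (Y * X) := by
  refine iSup₂_le fun μ hμ ↦ ?_
  rcases eq_or_ne μ 0 with rfl | μ_ne_zero
  · simp
  · exact le_iSup₂_of_le μ ((mem_spectrum_mul_comm X Y μ_ne_zero).mp hμ) le_rfl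

theorem specRad_mul_comm (X : Matrix ι κ ℝ) (Y : Matrix κ ι ℝ) :
    specRad (X * Y) = specRad (Y * X) := by
  change spectralRadius ℂ ((X * Y).map Complex.ofRealHom) =
    spectralRadius ℂ ((Y * X).map Complex.ofRealHom)
  rw [Matrix.map_mul, Matrix.map_mul]
  exact (spectralRadius_mul_le_mul_comm _ _).antisymm (spectralRadius_mul_le_mul_comm _ _)

theorem specRad_blockAF {n m : ℕ} (A : Matrix (Fin n) (Fin n) ℝ) (B : Matrix (Fin n) (Fin m) ℝ)
    (F : Matrix (Fin m) (Fin n) ℝ) : specRad (blockAF A B F) = specRad (A + B * F) := by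
  have blockAF_eq : blockAF A B F = extendF F * fromCols A B := by
    simp [blockAF, extendF]
  have fromCols_mul_extendF : fromCols A B * extendF F = A + B * F := by
    simp [extendF, fromCols_mul_fromRows]
  rw [blockAF_eq, specRad_mul_comm, fromCols_mul_extendF]

end SpectralRadius

section Lyapunov

open scoped Matrix.Norms.Frobenius

variable {ι : Type*} [Fintype ι]

/-- The discounted Lyapunov operator `X ↦ γ M X Mᵀ`: the Lyapunov equation with right-hand side `Q`
is the fixed-point equation `lyapunovOp γ M S + Q = S`. -/
noncomputable def lyapunovOp (γ : ℝ) (M : Matrix ι ι ℝ) : Module.End ℝ (Matrix ι ι ℝ) :=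
  γ • (LinearMap.mulRight ℝ Mᵀ ∘ₗ LinearMap.mulLeft ℝ M)

variable {γ : ℝ} {M W Γ : Matrix ι ι ℝ}

theorem lyapunovOp_apply (X : Matrix ι ι ℝ) : lyapunovOp γ M X = γ • (M * X * Mᵀ) := rfl

theorem posSemidef_lyapunovOp (hγ : 0 ≤ γ) {X : Matrix ι ι ℝ} (hX : X.PosSemidef) :
    (lyapunovOp γ M X).PosSemidef := by
  simpa [lyapunovOp_apply] using (hX.mul_mul_conjTranspose_same M).smul hγ

theorem posSemidef_lyapunovOp_pow (hγ : 0 ≤ γ) {X : Matrix ι ι ℝ} (hX : X.PosSemidef) (k : ℕ) :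
    ((lyapunovOp γ M ^ k) X).PosSemidef := by
  induction k with
  | zero => simpa using hX
  | succ k ih =>
    rw [pow_succ', Module.End.mul_apply]
    exact posSemidef_lyapunovOp hγ ih

theorem posDef_of_hasSum_lyapunovOp_pow (hγ : 0 ≤ γ) {Q S : Matrix ι ι ℝ} (hQ : Q.PosDef)
    (hS : HasSum (fun k ↦ (lyapunovOp γ M ^ k) Q) S) : S.PosDef := by
  have S_posSemidef : S.PosSemidef :=
    posSemidef_of_hasSum (posSemidef_lyapunovOp_pow hγ hQ.posSemidef) hS
  rw [← apply_add_eq_of_hasSum_pow_apply (LinearMap.continuous_of_finiteDimensional _) hS]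
  exact .posSemidef_add (posSemidef_lyapunovOp hγ S_posSemidef) hQ

variable [DecidableEq ι]

theorem lyapunovOp_pow_apply (k : ℕ) (X : Matrix ι ι ℝ) :
    (lyapunovOp γ M ^ k) X = γ ^ k • (M ^ k * X * (M ^ k)ᵀ) := by
  induction k with
  | zero => simp
  | succ k ih =>
    rw [pow_succ', Module.End.mul_apply, ih, lyapunovOp_apply, pow_succ' M,
      pow_succ' γ, transpose_mul]
    simp only [Matrix.mul_smul, Matrix.smul_mul, smul_smul, Matrix.mul_assoc]

theorem isBigO_lyapunovOp_pow_apply {r : ℝ≥0} (hM : specRad M < r) (X : Matrix ι ι ℝ) :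
    (fun k ↦ (lyapunovOp γ M ^ k) X) =O[atTop] fun k ↦ (γ * r ^ 2) ^ k := by
  have pow_bound := isBigO_pow_of_specRad_lt hM
  have transpose_bound : (fun k ↦ (M ^ k)ᵀ) =O[atTop] fun k ↦ (r : ℝ) ^ k :=
    .of_norm_left <| pow_bound.norm_left.congr_left fun k ↦
      (frobenius_norm_transpose (M ^ k)).symm
  have conj_bound : (fun k ↦ M ^ k * X * (M ^ k)ᵀ) =O[atTop] fun k ↦ (r : ℝ) ^ k * 1 * r ^ k :=
    (pow_bound.mul (isBigO_const_const X one_ne_zero _)).mul transpose_bound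
  refine ((isBigO_refl (fun k ↦ γ ^ k) atTop).smul conj_bound).congr
    (fun k ↦ (lyapunovOp_pow_apply k X).symm) fun k ↦ ?_
  rw [smul_eq_mul]
  ring

theorem summable_lyapunovOp_pow_apply {r : ℝ≥0} (hM : specRad M < r) (hγ : 0 ≤ γ)
    (hγr : γ * r ^ 2 < 1) (X : Matrix ι ι ℝ) : Summable fun k ↦ (lyapunovOp γ M ^ k) X :=
  summable_of_isBigO_nat (summable_geometric_of_lt_one (by positivity) hγr)
    (isBigO_lyapunovOp_pow_apply hM X)

theorem series_term_eq_lyapunovOp_pow (k : ℕ) :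
    γ ^ k • (M ^ k * Γ * (M ^ k)ᵀ + ∑ j ∈ range k, M ^ j * W * (M ^ j)ᵀ) =
      (lyapunovOp γ M ^ k) Γ + ∑ j ∈ range k, γ ^ (k - j) • (lyapunovOp γ M ^ j) W := by
  rw [smul_add, ← lyapunovOp_pow_apply, smul_sum]
  congr 1
  refine sum_congr rfl fun j hj ↦ ?_
  rw [lyapunovOp_pow_apply, smul_smul, pow_sub_mul_pow γ (mem_range.mp hj).le]

theorem hasSum_series_of_hasSum_lyapunovOp_pow (hγ : ‖γ‖ < 1) {SΓ SW : Matrix ι ι ℝ}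
    (hΓ : HasSum (fun k ↦ (lyapunovOp γ M ^ k) Γ) SΓ)
    (hW : HasSum (fun k ↦ (lyapunovOp γ M ^ k) W) SW) :
    HasSum (fun k ↦ γ ^ k • (M ^ k * Γ * (M ^ k)ᵀ + ∑ j ∈ range k, M ^ j * W * (M ^ j)ᵀ))
      (SΓ + (γ / (1 - γ)) • SW) := by
  simp only [series_term_eq_lyapunovOp_pow]
  exact hΓ.add (hasSum_sum_range_pow_sub_smul hγ hW hW.summable.norm)

end Lyapunov

theorem series_solves_lyapunov_general {ι : Type*} [Fintype ι] [DecidableEq ι]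
    {M W Γ : Matrix ι ι ℝ} {γ : ℝ} {r : ℝ≥0} (hγ0 : 0 ≤ γ) (hγ1 : γ < 1)
    (hM : specRad M < r) (hγr : γ * r ^ 2 < 1) (hW : W.PosSemidef) (hΓ : Γ.PosDef) :
    ∃ S : Matrix ι ι ℝ,
      HasSum (fun k : ℕ ↦
        γ ^ k • (M ^ k * Γ * (M ^ k)ᵀ + ∑ j ∈ range k, M ^ j * W * (M ^ j)ᵀ)) S ∧
      S.PosDef ∧
      γ • (M * S * Mᵀ) + Γ + (γ / (1 - γ)) • W = S ∧
      ∀ S' : Matrix ι ι ℝ, γ • (M * S' * Mᵀ) + Γ + (γ / (1 - γ)) • W = S' → S' = S := by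
  have summable := summable_lyapunovOp_pow_apply hM hγ0 hγr
  obtain ⟨SΓ, hSΓ⟩ := summable Γ
  obtain ⟨SW, hSW⟩ := summable W
  let c := γ / (1 - γ)
  have hasSum_neumann : HasSum (fun k ↦ (lyapunovOp γ M ^ k) (Γ + c • W)) (SΓ + c • SW) := by
    simpa only [map_add, map_smul] using hSΓ.add (hSW.const_smul c)
  have posDef_rhs : (Γ + c • W).PosDef :=
    hΓ.add_posSemidef (hW.smul (div_nonneg hγ0 (sub_nonneg.mpr hγ1.le)))
  have solves : lyapunovOp γ M (SΓ + c • SW) + (Γ + c • W) = SΓ + c • SW :=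
    apply_add_eq_of_hasSum_pow_apply (LinearMap.continuous_of_finiteDimensional _) hasSum_neumann
  refine ⟨SΓ + c • SW,
    hasSum_series_of_hasSum_lyapunovOp_pow (by rwa [Real.norm_of_nonneg hγ0]) hSΓ hSW,
    posDef_of_hasSum_lyapunovOp_pow hγ0 posDef_rhs hasSum_neumann,
    (add_assoc _ _ _).trans solves, fun S' solves' ↦ ?_⟩
  exact eq_of_apply_add_eq_of_tendsto_pow_apply (summable _).tendsto_atTop_zero
    ((add_assoc _ _ _).symm.trans solves') solves

theorem series_solves_lyapunov (n m : ℕ) (hn : 0 < n) (hm : 0 < m)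
    (A : Matrix (Fin n) (Fin n) ℝ) (B : Matrix (Fin n) (Fin m) ℝ)
    (γ : ℝ) (hγ0 : 0 < γ) (hγ1 : γ < 1)
    (Sw : Matrix (Fin n) (Fin n) ℝ) (hSw : Sw.PosDef)
    (Γ : Matrix (Fin n ⊕ Fin m) (Fin n ⊕ Fin m) ℝ) (hΓ : Γ.PosDef)
    (F : Matrix (Fin m) (Fin n) ℝ) (hF : specRad (A + B * F) < 1) :
    ∃ S : Matrix (Fin n ⊕ Fin m) (Fin n ⊕ Fin m) ℝ,
      HasSum (fun k : ℕ => γ ^ k •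
          ((blockAF A B F) ^ k * Γ * ((blockAF A B F) ^ k)ᵀ
            + ∑ j ∈ Finset.range k,
                (blockAF A B F) ^ j * (extendF F * Sw * (extendF F)ᵀ)
                  * ((blockAF A B F) ^ j)ᵀ)) S ∧
      S.PosDef ∧
      γ • (blockAF A B F * S * (blockAF A B F)ᵀ) + Γ
          + (γ / (1 - γ)) • (extendF F * Sw * (extendF F)ᵀ) = S ∧
      ∀ S' : Matrix (Fin n ⊕ Fin m) (Fin n ⊕ Fin m) ℝ, S'.PosDef →
        γ • (blockAF A B F * S' * (blockAF A B F)ᵀ) + Γ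
            + (γ / (1 - γ)) • (extendF F * Sw * (extendF F)ᵀ) = S' → S' = S := by
  have hW : (extendF F * Sw * (extendF F)ᵀ).PosSemidef := by
    simpa using hSw.posSemidef.mul_mul_conjTranspose_same (extendF F)
  have hM : specRad (blockAF A B F) < (1 : ℝ≥0) := by
    rwa [specRad_blockAF, ENNReal.coe_one]
  obtain ⟨S, hS, S_posDef, solves, unique⟩ :=
    series_solves_lyapunov_general hγ0.le hγ1 hM (by simpa using hγ1) hW hΓ
  exact ⟨S, hS, S_posDef, solves, fun S' _ ↦ unique S'⟩
end

section
/- Let F⁰ ∈ ℝ^{m×n} satisfy ρ(A + BF⁰) < 1, and suppose both of the following iterations are initialized at F⁰ and are well defined for all s ≥ 0: (classical policy iteration) X^s is the unique symmetric solution of X = γ(A + BF^s)'X(A + BF^s) + (F^s)'RF^s + Q and F^{s+1} := −γ(R + γB'X^sB)⁻¹B'X^sA; (primal-dual iteration) P^s is the unique symmetric solution of γ (A_{F_p^s})' P A_{F_p^s} + Λ = P with P^s_{22} positive definite, F_p⁰ = F⁰, and F_p^{s+1} := −(P^s_{22})⁻¹ (P^s_{12})'. Then for every s ≥ 0: F_p^s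 = F^s and X^s = (F̄_p^s)' P^s F̄_p^s, where F̄_p^s = [I_n; F_p^s]. -/
open Matrix MeasureTheory Filter
open scoped ENNReal

/-!
Let `φ X = γ [A B]ᵀ X [A B] + diag(Q, R)` be the Q-matrix of the value `X`, and let
`ψ P = F̄ᵀ P F̄` with `F̄ = [1; F]` be the value of acting by `F` under the Q-matrix `P`. Since
`A_F = F̄ [A B]` and `[A B] F̄ = A + B F`, the primal-dual evaluation map is `φ ∘ ψ` and the
classical one is `ψ ∘ φ`. Hence `ψ` sends fixed points of the former to fixed points of the latter,
and `φ` recovers `P` from `X = ψ P`. The blocks of `φ X` are the coefficients in the classical gain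
update, so both iterations also produce the same next gain.
-/

section Evaluation

variable {K ι κ : Type*} [CommSemiring K] [Fintype ι] [Fintype κ] [DecidableEq ι]

/-- The matrix `F̄ = [1; F]` of the map `x ↦ (x, F x)`, which parametrizes the graph of the feedback
law `u = F x`. -/
def feedbackGraph (F : Matrix κ ι K) : Matrix (ι ⊕ κ) ι K :=
  fromRows 1 F

/-- The matrix `A_F = [[A, B], [F A, F B]]` of the state-input dynamics: a pair `(x, u)` moves to
the state `A x + B u`, paired with the input that the feedback `F` chooses there. -/
def stateInputDynamics (A : Matrix ι ι K) (B : Matrix ι κ K) (F : Matrix κ ι K) :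
    Matrix (ι ⊕ κ) (ι ⊕ κ) K :=
  fromBlocks A B (F * A) (F * B)

/-- The policy evaluation operator of the feedback `F` on quadratic value functions `xᵀ X x`: the
cost of one step under `F` plus the discounted value at the next state. -/
def policyEvaluation (A : Matrix ι ι K) (B : Matrix ι κ K) (Q : Matrix ι ι K) (R : Matrix κ κ K)
    (γ : K) (F : Matrix κ ι K) (X : Matrix ι ι K) : Matrix ι ι K :=
  γ • ((A + B * F)ᵀ * X * (A + B * F)) + Fᵀ * R * F + Q

/-- The policy evaluation operator on quadratic state-input value functions, where the current input
is free and all later inputs are chosen by the feedback `F`. -/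
def stateInputEvaluation (A : Matrix ι ι K) (B : Matrix ι κ K) (Q : Matrix ι ι K)
    (R : Matrix κ κ K) (γ : K) (F : Matrix κ ι K) (P : Matrix (ι ⊕ κ) (ι ⊕ κ) K) :
    Matrix (ι ⊕ κ) (ι ⊕ κ) K :=
  γ • ((stateInputDynamics A B F)ᵀ * P * stateInputDynamics A B F) + fromBlocks Q 0 0 R

/-- The Q-matrix of the value `X`: the quadratic form in `(x, u)` that adds the stage cost
`xᵀ Q x + uᵀ R u` to the discounted value at the next state `A x + B u`. -/
def qMatrix (A : Matrix ι ι K) (B : Matrix ι κ K) (Q : Matrix ι ι K) (R : Matrix κ κ K) (γ : K)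
    (X : Matrix ι ι K) : Matrix (ι ⊕ κ) (ι ⊕ κ) K :=
  γ • ((fromCols A B)ᵀ * X * fromCols A B) + fromBlocks Q 0 0 R

end Evaluation

section Factorization

variable {K ι κ : Type*} [CommSemiring K] [Fintype ι]
  (A : Matrix ι ι K) (B : Matrix ι κ K) (Q : Matrix ι ι K) (R : Matrix κ κ K) (γ : K)
  (F : Matrix κ ι K)

theorem qMatrix_eq_fromBlocks (X : Matrix ι ι K) :
    qMatrix A B Q R γ X = fromBlocks (γ • (Aᵀ * X * A) + Q) (γ • (Aᵀ * X * B))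
      (γ • (Bᵀ * X * A)) (γ • (Bᵀ * X * B) + R) := by
  rw [qMatrix, transpose_fromCols, fromRows_mul, fromRows_mul_fromCols, fromBlocks_smul,
    fromBlocks_add, add_zero, add_zero]

variable [DecidableEq ι]

theorem stateInputDynamics_eq_feedbackGraph_mul :
    stateInputDynamics A B F = feedbackGraph F * fromCols A B := by
  rw [stateInputDynamics, feedbackGraph, fromRows_mul_fromCols, Matrix.one_mul, Matrix.one_mul]

variable [Fintype κ]

theorem fromCols_mul_feedbackGraph : fromCols A B * feedbackGraph F = A + B * F := by
  rw [feedbackGraph, fromCols_mul_fromRows, Matrix.mul_one]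

theorem feedbackGraph_transpose_mul_fromBlocks_mul :
    (feedbackGraph F)ᵀ * fromBlocks Q 0 0 R * feedbackGraph F = Fᵀ * R * F + Q := by
  simp [feedbackGraph, transpose_fromRows, fromCols_mul_fromBlocks, fromCols_mul_fromRows, add_comm]

theorem stateInputEvaluation_eq_qMatrix (P : Matrix (ι ⊕ κ) (ι ⊕ κ) K) :
    stateInputEvaluation A B Q R γ F P =
      qMatrix A B Q R γ ((feedbackGraph F)ᵀ * P * feedbackGraph F) := by
  simp only [stateInputEvaluation, qMatrix, stateInputDynamics_eq_feedbackGraph_mul, transpose_mul,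
    Matrix.mul_assoc]

theorem feedbackGraph_transpose_mul_qMatrix_mul (X : Matrix ι ι K) :
    (feedbackGraph F)ᵀ * qMatrix A B Q R γ X * feedbackGraph F =
      policyEvaluation A B Q R γ F X := by
  rw [qMatrix, Matrix.mul_add, Matrix.add_mul, feedbackGraph_transpose_mul_fromBlocks_mul,
    policyEvaluation, ← fromCols_mul_feedbackGraph A B F]
  simp only [transpose_mul, Matrix.mul_smul, Matrix.smul_mul, Matrix.mul_assoc, add_assoc]

end Factorization

section FixedPoints

variable {K ι κ : Type*} [CommSemiring K] [Fintype ι] [Fintype κ] [DecidableEq κ]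

/-- `X` is the value of the feedback `F`: the unique symmetric fixed point of its policy
evaluation. -/
structure IsPolicyValue (A : Matrix ι ι K) (B : Matrix ι κ K) (Q : Matrix ι ι K) (R : Matrix κ κ K)
    (γ : K) (F : Matrix κ ι K) (X : Matrix ι ι K) : Prop where
  isSymm : X.IsSymm
  eq : X = policyEvaluation A B Q R γ F X
  unique : ∀ Y : Matrix ι ι K, Y.IsSymm → Y = policyEvaluation A B Q R γ F Y → Y = X

/-- `P` is a state-input value of the feedback `F`: a symmetric fixed point of its state-input
evaluation. The input block is required to be invertible so that the primal-dual update is not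
computed from the junk inverse `0`. -/
structure IsStateInputValue (A : Matrix ι ι K) (B : Matrix ι κ K) (Q : Matrix ι ι K)
    (R : Matrix κ κ K) (γ : K) (F : Matrix κ ι K) (P : Matrix (ι ⊕ κ) (ι ⊕ κ) K) : Prop where
  isSymm : P.IsSymm
  eq : stateInputEvaluation A B Q R γ F P = P
  isUnit_toBlocks₂₂ : IsUnit P.toBlocks₂₂

variable {A : Matrix ι ι K} {B : Matrix ι κ K} {Q : Matrix ι ι K} {R : Matrix κ κ K} {γ : K}
  {F : Matrix κ ι K} {X : Matrix ι ι K} {P : Matrix (ι ⊕ κ) (ι ⊕ κ) K}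

theorem IsPolicyValue.eq_of_isStateInputValue [DecidableEq ι] (hX : IsPolicyValue A B Q R γ F X)
    (hP : IsStateInputValue A B Q R γ F P) : X = (feedbackGraph F)ᵀ * P * feedbackGraph F := by
  refine (hX.unique _ ?_ ?_).symm
  · rw [IsSymm, transpose_mul, transpose_mul, transpose_transpose, hP.isSymm.eq, Matrix.mul_assoc]
  · rw [← feedbackGraph_transpose_mul_qMatrix_mul, ← stateInputEvaluation_eq_qMatrix, hP.eq]

theorem IsStateInputValue.eq_qMatrix (hP : IsStateInputValue A B Q R γ F P)
    (hX : IsPolicyValue A B Q R γ F X) : P = qMatrix A B Q R γ X := by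
  classical
  rw [hX.eq_of_isStateInputValue hP, ← stateInputEvaluation_eq_qMatrix, hP.eq]

end FixedPoints

section Improvement

variable {K ι κ : Type*} [CommRing K] [Fintype ι] [Fintype κ] [DecidableEq κ]

/-- The classical policy improvement: the gain that is greedy for the value `X`. -/
noncomputable def policyGain (A : Matrix ι ι K) (B : Matrix ι κ K) (R : Matrix κ κ K) (γ : K)
    (X : Matrix ι ι K) : Matrix κ ι K :=
  -(γ • ((R + γ • (Bᵀ * X * B))⁻¹ * (Bᵀ * X * A)))

/-- The primal-dual policy improvement: the stationary point in `u` of the quadratic form `P` in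
`(x, u)`, as a feedback in `x`. -/
noncomputable def stateInputGain (P : Matrix (ι ⊕ κ) (ι ⊕ κ) K) : Matrix κ ι K :=
  -(P.toBlocks₂₂⁻¹ * P.toBlocks₁₂ᵀ)

theorem stateInputGain_qMatrix (A : Matrix ι ι K) (B : Matrix ι κ K) (Q : Matrix ι ι K)
    (R : Matrix κ κ K) (γ : K) {X : Matrix ι ι K} (hX : X.IsSymm) :
    stateInputGain (qMatrix A B Q R γ X) = policyGain A B R γ X := by
  have cross_block : (Aᵀ * X * B)ᵀ = Bᵀ * X * A := by
    rw [transpose_mul, transpose_mul, transpose_transpose, hX.eq, Matrix.mul_assoc]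
  rw [stateInputGain, policyGain, qMatrix_eq_fromBlocks, toBlocks_fromBlocks₂₂,
    toBlocks_fromBlocks₁₂, transpose_smul, cross_block, Matrix.mul_smul, add_comm R]

end Improvement

theorem pi_equals_primal_dual_general {K ι κ : Type*} [CommRing K] [Fintype ι] [Fintype κ]
    [DecidableEq ι] [DecidableEq κ] {A : Matrix ι ι K} {B : Matrix ι κ K} {Q : Matrix ι ι K}
    {R : Matrix κ κ K} {γ : K}
    {F : ℕ → Matrix κ ι K} {X : ℕ → Matrix ι ι K}
    (hX : ∀ s, IsPolicyValue A B Q R γ (F s) (X s))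
    (hF : ∀ s, F (s + 1) = policyGain A B R γ (X s))
    {Fp : ℕ → Matrix κ ι K} {P : ℕ → Matrix (ι ⊕ κ) (ι ⊕ κ) K}
    (hP : ∀ s, IsStateInputValue A B Q R γ (Fp s) (P s))
    (hFp : ∀ s, Fp (s + 1) = stateInputGain (P s)) (hinit : Fp 0 = F 0) (s : ℕ) :
    Fp s = F s ∧ X s = (feedbackGraph (Fp s))ᵀ * P s * feedbackGraph (Fp s) := by
  have gains_eq : Fp s = F s := by
    induction s with
    | zero => exact hinit
    | succ s ih =>
      rw [hFp, hF, (hP s).eq_qMatrix (ih ▸ hX s), stateInputGain_qMatrix A B Q R γ (hX s).isSymm]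
  exact ⟨gains_eq, IsPolicyValue.eq_of_isStateInputValue (gains_eq ▸ hX s) (hP s)⟩

theorem pi_equals_primal_dual (n m : ℕ) (hn : 0 < n) (hm : 0 < m)
    (A : Matrix (Fin n) (Fin n) ℝ) (B : Matrix (Fin n) (Fin m) ℝ)
    (Q : Matrix (Fin n) (Fin n) ℝ) (R : Matrix (Fin m) (Fin m) ℝ)
    (hQ : Q.PosSemidef) (hR : R.PosDef)
    (γ : ℝ) (hγ0 : 0 < γ) (hγ1 : γ < 1)
    (F0 : Matrix (Fin m) (Fin n) ℝ) (hF0 : specRad (A + B * F0) < 1)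
    -- classical policy iteration
    (Fseq : ℕ → Matrix (Fin m) (Fin n) ℝ)
    (Xseq : ℕ → Matrix (Fin n) (Fin n) ℝ)
    (hFinit : Fseq 0 = F0)
    (hXdef : ∀ s : ℕ, (Xseq s).IsSymm
      ∧ Xseq s = γ • ((A + B * Fseq s)ᵀ * Xseq s * (A + B * Fseq s))
          + (Fseq s)ᵀ * R * Fseq s + Q
      ∧ ∀ Y : Matrix (Fin n) (Fin n) ℝ, Y.IsSymm →
          Y = γ • ((A + B * Fseq s)ᵀ * Y * (A + B * Fseq s))
              + (Fseq s)ᵀ * R * Fseq s + Q → Y = Xseq s)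
    (hFstep : ∀ s : ℕ, Fseq (s + 1) = gainF A B R γ (Xseq s))
    -- primal-dual iteration
    (Fpseq : ℕ → Matrix (Fin m) (Fin n) ℝ)
    (Pseq : ℕ → Matrix (Fin n ⊕ Fin m) (Fin n ⊕ Fin m) ℝ)
    (hFpinit : Fpseq 0 = F0)
    (hPdef : ∀ s : ℕ, (Pseq s).IsSymm
      ∧ γ • ((blockAF A B (Fpseq s))ᵀ * Pseq s * blockAF A B (Fpseq s))
          + blockLam Q R = Pseq s
      ∧ ((Pseq s).toBlocks₂₂).PosDef
      ∧ ∀ P' : Matrix (Fin n ⊕ Fin m) (Fin n ⊕ Fin m) ℝ, P'.IsSymm →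
          γ • ((blockAF A B (Fpseq s))ᵀ * P' * blockAF A B (Fpseq s))
              + blockLam Q R = P' → P' = Pseq s)
    (hFpstep : ∀ s : ℕ,
      Fpseq (s + 1) = -(((Pseq s).toBlocks₂₂)⁻¹ * ((Pseq s).toBlocks₁₂)ᵀ)) :
    ∀ s : ℕ, Fpseq s = Fseq s
      ∧ Xseq s = (extendF (Fpseq s))ᵀ * Pseq s * extendF (Fpseq s) :=
  pi_equals_primal_dual_general (fun s ↦ ⟨(hXdef s).1, (hXdef s).2.1, (hXdef s).2.2⟩) hFstep
    (fun s ↦ ⟨(hPdef s).1, (hPdef s).2.1, (hPdef s).2.2.1.isUnit⟩) hFpstep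
    (hFpinit.trans hFinit.symm)
end
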